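/- Let K be a field of characteristic zero and let A₁ be the first Weyl algebra. If P, Q ∈ A₁ satisfy [P,Q] = 1 and at least one of m(P) = 1 or m(Q) = 1 holds, then there exists a K-algebra automorphism τ of A₁ such that P = τ(Y) and Q = τ(X). -/

import Mathlib

open Polynomial

noncomputable section

variable (K : Type) [Field K] [CharZero K]

/-- Defining relation of the first Weyl algebra: `Y*X = X*Y + 1`, i.e. `[Y,X] = 1`
(`true` encodes `X`, `false` encodes `Y`). -/
inductive WeylRel : FreeAlgebra K Bool → FreeAlgebra K Bool → Prop
  | comm : WeylRel (FreeAlgebra.ι K false * FreeAlgebra.ι K true)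
      (FreeAlgebra.ι K true * FreeAlgebra.ι K false + 1)

/-- The first Weyl algebra `A₁ = K⟨X,Y | YX - XY = 1⟩`. -/
abbrev Weyl : Type := RingQuot (WeylRel K)

/-- The generator `X` of the Weyl algebra. -/
def Wx : Weyl K := RingQuot.mkAlgHom K (WeylRel K) (FreeAlgebra.ι K true)

/-- The generator `Y` of the Weyl algebra. -/
def Wy : Weyl K := RingQuot.mkAlgHom K (WeylRel K) (FreeAlgebra.ι K false)

/-- The element `H = Y*X`. -/
def WH : Weyl K := Wy K * Wx K

/-- `X^n` for `n ≥ 0` and `Y^{-n}` for `n < 0`. -/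
def weight (n : ℤ) : Weyl K := if 0 ≤ n then Wx K ^ n.toNat else Wy K ^ (-n).toNat

/-- The `n`-th homogeneous component `A_{1,n}` of the `ℤ`-grading of the Weyl algebra:
`K[H]·Xⁿ` for `n ≥ 0` and `K[H]·Y^{-n}` for `n < 0`. -/
def component (n : ℤ) : Submodule K (Weyl K) :=
  LinearMap.range ((LinearMap.mulRight K (weight K n)).comp
    (Polynomial.aeval (WH K)).toLinearMap)

set_option linter.unusedSectionVars false

variable {K} in
/-- Homs out of the Weyl algebra. -/
def mkHom {A : Type} [Ring A] [Algebra K A] (a b : A) (h : b * a = a * b + 1) :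
    Weyl K →ₐ[K] A :=
  RingQuot.liftAlgHom K ⟨FreeAlgebra.lift K (fun t : Bool => if t then a else b), by
    intro x y hxy
    cases hxy
    simp [h]⟩

theorem mkHom_x {A : Type} [Ring A] [Algebra K A] (a b : A) (h : b * a = a * b + 1) :
    mkHom (K := K) a b h (Wx K) = a := by
  simp [mkHom, Wx]

theorem mkHom_y {A : Type} [Ring A] [Algebra K A] (a b : A) (h : b * a = a * b + 1) :
    mkHom (K := K) a b h (Wy K) = b := by
  simp [mkHom, Wy]

theorem weyl_rel : Wy K * Wx K = Wx K * Wy K + 1 := by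
  have := RingQuot.mkAlgHom_rel K (WeylRel.comm (K := K))
  simpa [Wx, Wy] using this

theorem weyl_hom_ext {A : Type} [Ring A] [Algebra K A] (f g : Weyl K →ₐ[K] A)
    (hx : f (Wx K) = g (Wx K)) (hy : f (Wy K) = g (Wy K)) : f = g := by
  apply RingQuot.ringQuot_ext'
  apply FreeAlgebra.hom_ext
  funext t
  cases t
  · exact hy
  · exact hx

theorem y_xpow (a : ℕ) : Wy K * Wx K ^ a = Wx K ^ a * Wy K + (a : K) • Wx K ^ (a - 1) := by
  induction a with
  | zero => simp
  | succ a ih =>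
    rw [pow_succ, ← mul_assoc, ih, add_mul, mul_assoc, weyl_rel, mul_add, mul_one, smul_mul_assoc,
      ← pow_succ]
    rcases a with _ | a
    · simp [mul_assoc]
    · simp only [Nat.add_sub_cancel, Nat.cast_add, Nat.cast_one, add_smul, one_smul, pow_succ, mul_assoc]
      abel

theorem weyl_induction (q : Weyl K) (S : Submodule K (Weyl K)) (h1 : 1 ∈ S)
    (hx : ∀ s ∈ S, Wx K * s ∈ S) (hy : ∀ s ∈ S, Wy K * s ∈ S) : q ∈ S := by
  obtain ⟨w, rfl⟩ := RingQuot.mkAlgHom_surjective K (WeylRel K) q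
  suffices H : ∀ s ∈ S, RingQuot.mkAlgHom K (WeylRel K) w * s ∈ S by
    simpa using H 1 h1
  induction w using FreeAlgebra.induction with
  | grade0 r =>
    intro s hs
    rw [AlgHom.commutes, ← Algebra.smul_def]
    exact S.smul_mem _ hs
  | grade1 t =>
    intro s hs
    cases t
    · exact hy s hs
    · exact hx s hs
  | mul a b ha hb =>
    intro s hs
    rw [map_mul, mul_assoc]
    exact ha _ (hb _ hs)
  | add a b ha hb =>
    intro s hs
    rw [map_add, add_mul]
    exact S.add_mem (ha _ hs) (hb _ hs)

theorem mem_mono_span (q : Weyl K) :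
    q ∈ Submodule.span K (Set.range fun ab : ℕ × ℕ => Wx K ^ ab.1 * Wy K ^ ab.2) := by
  apply weyl_induction
  · exact Submodule.subset_span ⟨(0, 0), by simp⟩
  · intro s hs
    induction hs using Submodule.span_induction with
    | mem s h =>
      obtain ⟨⟨a, b⟩, rfl⟩ := h
      exact Submodule.subset_span ⟨(a + 1, b), by simp [pow_succ', mul_assoc]⟩
    | zero => simp
    | add s t _ _ h1 h2 => rw [mul_add]; exact Submodule.add_mem _ h1 h2
    | smul c s _ h => rw [mul_smul_comm]; exact Submodule.smul_mem _ _ h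
  · intro s hs
    induction hs using Submodule.span_induction with
    | mem s h =>
      obtain ⟨⟨a, b⟩, rfl⟩ := h
      simp only
      rw [← mul_assoc, y_xpow, add_mul, smul_mul_assoc, mul_assoc, ← pow_succ']
      exact Submodule.add_mem _ (Submodule.subset_span ⟨(a, b + 1), rfl⟩)
        (Submodule.smul_mem _ _ (Submodule.subset_span ⟨(a - 1, b), rfl⟩))
    | zero => simp
    | add s t _ _ h1 h2 => rw [mul_add]; exact Submodule.add_mem _ h1 h2
    | smul c s _ h => rw [mul_smul_comm]; exact Submodule.smul_mem _ _ h

/-- Multiplication by the variable. -/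
def opX : Module.End K K[X] := LinearMap.mulLeft K (X : K[X])

/-- The derivative. -/
def opY : Module.End K K[X] := derivative

theorem op_rel : opY K * opX K = opX K * opY K + 1 := by
  apply LinearMap.ext
  intro f
  rw [LinearMap.add_apply, Module.End.mul_apply, Module.End.mul_apply, Module.End.one_apply]
  simp only [opX, opY, LinearMap.mulLeft_apply]
  rw [derivative_mul, derivative_X]
  ring

/-- Polynomial representation. -/
def rho : Weyl K →ₐ[K] Module.End K K[X] := mkHom (opX K) (opY K) (op_rel K)

theorem rho_x (f : K[X]) : rho K (Wx K) f = X * f := by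
  rw [rho, mkHom_x]; rfl

theorem rho_y (f : K[X]) : rho K (Wy K) f = derivative f := by
  rw [rho, mkHom_y]; rfl

theorem rho_xpow (m : ℕ) (f : K[X]) : rho K (Wx K ^ m) f = X ^ m * f := by
  induction m generalizing f with
  | zero => simp
  | succ m ih => rw [pow_succ, map_mul, Module.End.mul_apply, ih, rho_x, pow_succ, mul_assoc]

theorem rho_aevalx (p f : K[X]) : rho K (aeval (Wx K) p) f = p * f := by
  induction p using Polynomial.induction_on' with
  | add p q hp hq => simp [hp, hq, add_mul]
  | monomial n a =>
    rw [aeval_monomial, ← Algebra.smul_def, map_smul, LinearMap.smul_apply, rho_xpow,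
      ← C_mul_X_pow_eq_monomial, mul_assoc, smul_eq_C_mul]

theorem rho_ypow (m n : ℕ) : rho K (Wy K ^ m) (X ^ n) = (n.descFactorial m : K[X]) * X ^ (n - m) := by
  have : rho K (Wy K ^ m) (X ^ n) = derivative^[m] (X ^ n) := by
    generalize (X ^ n : K[X]) = f
    induction m generalizing f with
    | zero => simp
    | succ m ih => rw [pow_succ, map_mul, Module.End.mul_apply, ih, rho_y, Function.iterate_succ_apply]
  rw [this, Polynomial.iterate_derivative_X_pow_eq_natCast_mul]

theorem rho_H_coeff (f : K[X]) (n : ℕ) :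
    (rho K (WH K) f).coeff n = ((n : K) + 1) * f.coeff n := by
  rw [WH, map_mul, Module.End.mul_apply, rho_x, rho_y, coeff_derivative, coeff_X_mul, mul_comm]

theorem rho_Hpow_coeff (f : K[X]) (n k : ℕ) :
    (rho K (WH K ^ k) f).coeff n = ((n : K) + 1) ^ k * f.coeff n := by
  induction k generalizing f with
  | zero => simp
  | succ k ih => rw [pow_succ, map_mul, Module.End.mul_apply, ih, rho_H_coeff, pow_succ, mul_assoc]

theorem rho_pH_coeff (p f : K[X]) (n : ℕ) :
    (rho K (aeval (WH K) p) f).coeff n = p.eval ((n : K) + 1) * f.coeff n := by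
  induction p using Polynomial.induction_on' with
  | add p q hp hq => simp [hp, hq, add_mul]
  | monomial k a =>
    rw [aeval_monomial, ← Algebra.smul_def, map_smul, LinearMap.smul_apply, coeff_smul,
      rho_Hpow_coeff, eval_monomial, smul_eq_mul, mul_assoc]

theorem exists_finsupp (q : Weyl K) :
    ∃ c : ℕ →₀ K[X], q = c.sum fun b g => aeval (Wx K) g * Wy K ^ b := by
  induction mem_mono_span K q using Submodule.span_induction with
  | mem s h =>
    obtain ⟨⟨a, b⟩, rfl⟩ := h
    exact ⟨Finsupp.single b (X ^ a), by simp⟩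
  | zero => exact ⟨0, by simp⟩
  | add s t _ _ h1 h2 =>
    obtain ⟨c, rfl⟩ := h1
    obtain ⟨d, rfl⟩ := h2
    refine ⟨c + d, ?_⟩
    rw [Finsupp.sum_add_index'] <;> simp [add_mul]
  | smul r s _ h =>
    obtain ⟨c, rfl⟩ := h
    refine ⟨r • c, ?_⟩
    rw [Finsupp.sum_smul_index'] <;> simp [Finsupp.smul_sum]

theorem rho_inj (q : Weyl K) (h : rho K q = 0) : q = 0 := by
  obtain ⟨c, rfl⟩ := exists_finsupp K q
  suffices H : ∀ b, c b = 0 by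
    have : c = 0 := by ext1 b; exact H b
    simp [this]
  intro b
  induction b using Nat.strong_induction_on with
  | _ b ih =>
    have h2 := congrArg (fun L : Module.End K K[X] => L (X ^ b)) h
    simp only [Finsupp.sum, map_sum, LinearMap.sum_apply, map_mul, Module.End.mul_apply, rho_ypow,
      rho_aevalx, LinearMap.zero_apply] at h2
    rw [Finset.sum_eq_single b] at h2
    · simpa [Nat.descFactorial_self, Nat.factorial_ne_zero] using h2
    · intro j _ hj
      rcases lt_or_gt_of_ne hj with hj | hj
      · simp [ih j hj]
      · simp [Nat.descFactorial_of_lt hj]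
    · intro hb
      simp [Finsupp.notMem_support_iff.mp hb]

theorem coeff_lemma (m : ℕ) (q : Weyl K) : ∃ r : K[X], ∀ n : ℕ,
    (rho K q (X ^ (n + m))).coeff n = ((n + m).descFactorial m : K) * r.eval (n : K) := by
  induction mem_mono_span K q using Submodule.span_induction with
  | mem s h =>
    obtain ⟨⟨a, b⟩, rfl⟩ := h
    by_cases hb : b = m + a
    · subst hb
      refine ⟨descPochhammer K a, fun n => ?_⟩
      simp only [map_mul, Module.End.mul_apply, rho_ypow, rho_xpow]
      rw [descPochhammer_eval_eq_descFactorial, mul_left_comm, ← pow_add, ← Nat.cast_mul]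
      have h1 : (n + m).descFactorial (m + a) = (n + m).descFactorial m * n.descFactorial a := by
        have h5 := Nat.descFactorial_mul_descFactorial (n := n + m) (Nat.le_add_right m a)
        rw [Nat.add_sub_cancel, Nat.add_sub_cancel_left] at h5
        rw [← h5, mul_comm]
      rw [h1]
      by_cases hn : a ≤ n
      · rw [show a + (n + m - (m + a)) = n by omega, ← C_eq_natCast, coeff_C_mul]
        simp
      · simp [Nat.descFactorial_of_lt (not_le.mp hn)]
    · refine ⟨0, fun n => ?_⟩
      simp only [map_mul, Module.End.mul_apply, rho_ypow, rho_xpow]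
      rw [mul_left_comm, ← pow_add, ← C_eq_natCast, coeff_C_mul, coeff_X_pow]
      by_cases hn : b ≤ n + m
      · rw [if_neg (by omega)]; simp
      · simp [Nat.descFactorial_of_lt (not_le.mp hn)]
  | zero => exact ⟨0, by simp⟩
  | add s t _ _ h1 h2 =>
    obtain ⟨c, hc⟩ := h1
    obtain ⟨d, hd⟩ := h2
    exact ⟨c + d, fun n => by simp [hc, hd, mul_add]⟩
  | smul r s _ h =>
    obtain ⟨c, hc⟩ := h
    exact ⟨C r * c, fun n => by simp [hc]; ring⟩

theorem rho_pH_xpow (m : ℕ) (p f : K[X]) (n : ℕ) :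
    (rho K (aeval (WH K) p * Wx K ^ m) f).coeff (n + m)
      = p.eval (((n + m : ℕ) : K) + 1) * f.coeff n := by
  rw [map_mul, Module.End.mul_apply, rho_pH_coeff, rho_xpow, coeff_X_pow_mul]

theorem pH_xpow (m : ℕ) (p : K[X]) (n : ℕ) :
    rho K (aeval (WH K) p * Wx K ^ m) (X ^ n)
      = C (p.eval (((n + m : ℕ) : K) + 1)) * X ^ (n + m) := by
  ext k
  rw [map_mul, Module.End.mul_apply, rho_pH_coeff, rho_xpow, coeff_C_mul, ← pow_add, coeff_X_pow,
    coeff_X_pow, add_comm m n]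
  by_cases h : k = n + m
  · simp [h]
  · simp [h]

theorem poly_step (m : ℕ) (G : K[X])
    (h : ∀ n : ℕ, G.eval (n : K) - G.eval ((n + m : ℕ) : K) = 1) : G.natDegree ≤ 1 ∧ G ≠ 0 ∧ m ≠ 0 := by
  have hm : m ≠ 0 := by
    rintro rfl
    simpa using h 0
  have hm' : (m : K) ≠ 0 := by exact_mod_cast hm
  refine ⟨?_, ?_, hm⟩
  · have e : ∀ k : ℕ, G.eval ((k * m : ℕ) : K) = G.eval 0 - k := by
      intro k
      induction k with
      | zero => simp
      | succ k ih =>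
        have := h (k * m)
        rw [ih] at this
        rw [Nat.succ_mul, Nat.cast_succ]
        linear_combination -this
    have : G = C (G.eval 0) - C ((m : K)⁻¹) * X := by
      apply Polynomial.eq_of_infinite_eval_eq
      apply Set.Infinite.mono (s := Set.range fun k : ℕ => ((k * m : ℕ) : K))
      · rintro _ ⟨k, rfl⟩
        simp only [Set.mem_ofPred_eq]
        rw [e]
        simp
        field_simp
      · apply Set.infinite_range_of_injective
        intro a b hab
        have : a * m = b * m := Nat.cast_injective (R := K) hab
        exact Nat.eq_of_mul_eq_mul_right (Nat.pos_of_ne_zero hm) this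
    rw [this]
    compute_degree
  · rintro rfl
    simpa using h 0

theorem homog_pos (m : ℕ) (p : K[X]) (Q : Weyl K)
    (h : (aeval (WH K) p * Wx K ^ m) * Q - Q * (aeval (WH K) p * Wx K ^ m) = 1) :
    ∃ c : K, c ≠ 0 ∧ aeval (WH K) p * Wx K ^ m = c • Wx K := by
  obtain ⟨r, hr⟩ := coeff_lemma K m Q
  set G : K[X] := p.comp (X + C ((m : K) + 1)) * ((ascPochhammer K m).comp (X + C 1) * r) with hG
  have hasc : ∀ n : ℕ, ((ascPochhammer K m).comp (X + C 1)).eval (n : K)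
      = ((n + m).descFactorial m : K) := by
    intro n
    rw [eval_comp]
    have := ascPochhammer_nat_eq_descFactorial (n + 1) m
    rw [show n + 1 + m - 1 = n + m by omega] at this
    rw [← this]
    have h3 := ascPochhammer_eval_cast (S := K) m (n + 1)
    rw [h3]
    simp
  have hGe : ∀ n : ℕ, G.eval (n : K) = p.eval (((n + m : ℕ) : K) + 1) *
      (rho K Q (X ^ (n + m))).coeff n := by
    intro n
    rw [hr, hG, eval_mul, eval_mul, hasc, eval_comp]
    simp [add_assoc]
  have hstep : ∀ n : ℕ, G.eval (n : K) - G.eval ((n + m : ℕ) : K) = 1 := by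
    intro n
    have h2 := congrArg (fun w => (rho K w (X ^ (n + m))).coeff (n + m)) h
    beta_reduce at h2
    rw [map_sub, LinearMap.sub_apply, map_mul, map_mul _ Q, Module.End.mul_apply,
      Module.End.mul_apply, coeff_sub, rho_pH_xpow, pH_xpow, ← smul_eq_C_mul, map_smul, coeff_smul,
      smul_eq_mul, map_one, Module.End.one_apply, coeff_X_pow_self] at h2
    rw [hGe, hGe, h2]
  obtain ⟨h1, h2, h3⟩ := poly_step K m G hstep
  have ne1 := left_ne_zero_of_mul h2
  have ne2 := right_ne_zero_of_mul h2
  have ne3 := left_ne_zero_of_mul ne2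
  have ne4 := right_ne_zero_of_mul ne2
  rw [hG, natDegree_mul ne1 ne2, natDegree_mul ne3 ne4, natDegree_comp, natDegree_comp,
    natDegree_X_add_C, natDegree_X_add_C, ascPochhammer_natDegree] at h1
  have hm : m = 1 := by omega
  have hp : p.natDegree = 0 := by omega
  obtain ⟨c, rfl⟩ := natDegree_eq_zero.mp hp
  refine ⟨c, ?_, ?_⟩
  · rintro rfl
    simp at ne1
  · simp [hm, Algebra.smul_def]

theorem centralizer_x (q : Weyl K) (h : Wx K * q = q * Wx K) : ∃ g : K[X], q = aeval (Wx K) g := by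
  refine ⟨rho K q 1, ?_⟩
  rw [← sub_eq_zero]
  apply rho_inj
  have hc : ∀ f, rho K q (X * f) = X * rho K q f := by
    intro f
    have := congrArg (fun w => rho K w f) h
    simpa [Module.End.mul_apply, rho_x] using this.symm
  have hn : ∀ n : ℕ, rho K q (X ^ n) = X ^ n * rho K q 1 := by
    intro n
    induction n with
    | zero => simp
    | succ n ih => rw [pow_succ', hc, ih, mul_assoc]
  ext1 n
  ext1
  simp only [LinearMap.comp_apply, map_sub, LinearMap.sub_apply, rho_aevalx, monomial_one_right_eq_X_pow, hn,
    LinearMap.zero_apply]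
  ring

theorem aeval_commute {A : Type} [Ring A] [Algebra K A] (g : K[X]) (a : A) :
    aeval a g * a = a * aeval a g := by
  have : aeval a (g * X) = aeval a (X * g) := by rw [mul_comm]
  simpa using this

theorem gen1 {A : Type} [Ring A] [Algebra K A] (c : K) (hc : c ≠ 0) (x y u : A)
    (r : y * x = x * y + 1) (h : u * x = x * u) :
    (c • x) * (-(c⁻¹ • y) + u) = (-(c⁻¹ • y) + u) * (c • x) + 1 := by
  simp only [mul_add, add_mul, smul_mul_assoc, mul_smul_comm, mul_neg, neg_mul, h, smul_neg,
    smul_smul, mul_inv_cancel₀ hc, inv_mul_cancel₀ hc, one_smul, r, smul_add]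
  abel

theorem gen2 {A : Type} [Ring A] [Algebra K A] (c : K) (hc : c ≠ 0) (x y u : A)
    (r : y * x = x * y + 1) (h : u * (c⁻¹ • y) = (c⁻¹ • y) * u) :
    (-(c • x) + c • u) * (c⁻¹ • y) = (c⁻¹ • y) * (-(c • x) + c • u) + 1 := by
  rw [add_mul, mul_add, smul_mul_assoc c u, h, mul_smul_comm c _ u]
  simp only [smul_mul_assoc, mul_smul_comm, mul_neg, neg_mul, smul_neg,
    smul_smul, mul_inv_cancel₀ hc, inv_mul_cancel₀ hc, one_smul, r]
  abel

theorem gen3 {A : Type} [Ring A] [Algebra K A] (c : K) (hc : c ≠ 0) (x y Q : A)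
    (r : y * x = x * y + 1) (h : (c • x) * Q - Q * (c • x) = 1) :
    x * (Q + c⁻¹ • y) = (Q + c⁻¹ • y) * x := by
  have h2 : c⁻¹ • ((c • x) * Q - Q * (c • x)) = c⁻¹ • (1 : A) := by rw [h]
  rw [smul_mul_assoc, mul_smul_comm, ← smul_sub, smul_smul, inv_mul_cancel₀ hc, one_smul] at h2
  rw [mul_add, add_mul, smul_mul_assoc, mul_smul_comm, r, smul_add, ← h2]
  abel

theorem gen4 {A : Type} [Ring A] (P Q : A) : Q * (-P) - (-P) * Q = P * Q - Q * P := by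
  noncomm_ring

theorem gen5 {A : Type} [Ring A] (x y : A) : x * (-y) = 1 - (x * y + 1) := by
  noncomm_ring

theorem exists_auto (c : K) (hc : c ≠ 0) (g : K[X]) :
    ∃ τ : Weyl K ≃ₐ[K] Weyl K, c • Wx K = τ (Wy K) ∧ -(c⁻¹ • Wy K) + aeval (Wx K) g = τ (Wx K) := by
  have r := weyl_rel K
  let f1 : Weyl K →ₐ[K] Weyl K := mkHom (-(c⁻¹ • Wy K) + aeval (Wx K) g) (c • Wx K) (by
    have h := aeval_commute K g (Wx K)
    exact gen1 K c hc _ _ _ r h)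
  let f2 : Weyl K →ₐ[K] Weyl K := mkHom (c⁻¹ • Wy K)
      (-(c • Wx K) + c • aeval (c⁻¹ • Wy K) g) (by
    have h := aeval_commute K g (c⁻¹ • Wy K)
    exact gen2 K c hc _ _ _ r h)
  have f1x : f1 (Wx K) = -(c⁻¹ • Wy K) + aeval (Wx K) g := mkHom_x K _ _ _
  have f1y : f1 (Wy K) = c • Wx K := mkHom_y K _ _ _
  have f2x : f2 (Wx K) = c⁻¹ • Wy K := mkHom_x K _ _ _
  have f2y : f2 (Wy K) = -(c • Wx K) + c • aeval (c⁻¹ • Wy K) g := mkHom_y K _ _ _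
  refine ⟨AlgEquiv.ofAlgHom f1 f2 ?_ ?_, f1y.symm, f1x.symm⟩
  · apply weyl_hom_ext
    · simp [f2x, f1y, smul_smul, hc]
    · rw [AlgHom.comp_apply, f2y, map_add, map_neg, map_smul, map_smul, ← aeval_algHom_apply,
        map_smul, f1x, f1y]
      simp [smul_smul, hc]
  · apply weyl_hom_ext
    · rw [AlgHom.comp_apply, f1x, map_add, map_neg, map_smul, ← aeval_algHom_apply, f2x, f2y]
      simp [smul_smul, hc]
    · simp [f1y, f2x, smul_smul, hc]

theorem key_pos (m : ℕ) (p : K[X]) (P Q : Weyl K) (hP : P = aeval (WH K) p * Wx K ^ m)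
    (h : P * Q - Q * P = 1) :
    ∃ τ : Weyl K ≃ₐ[K] Weyl K, P = τ (Wy K) ∧ Q = τ (Wx K) := by
  obtain ⟨c, hc, hcx⟩ := homog_pos K m p Q (by rw [← hP]; exact h)
  rw [← hP] at hcx
  subst hcx
  obtain ⟨g, hg⟩ := centralizer_x K (Q + c⁻¹ • Wy K) (by
    exact gen3 K c hc _ _ _ (weyl_rel K) h)
  obtain ⟨τ, h1, h2⟩ := exists_auto K c hc g
  refine ⟨τ, h1, ?_⟩
  rw [← h2, ← hg]
  abel

theorem exists_sigma :
    ∃ τ : Weyl K ≃ₐ[K] Weyl K, Wx K = τ (Wy K) ∧ -Wy K = τ (Wx K) := by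
  simpa using exists_auto K 1 one_ne_zero 0

theorem key_comp (i : ℤ) (P Q : Weyl K) (hP : P ∈ component K i)
    (h : P * Q - Q * P = 1) :
    ∃ τ : Weyl K ≃ₐ[K] Weyl K, P = τ (Wy K) ∧ Q = τ (Wx K) := by
  obtain ⟨p, rfl⟩ := hP
  simp only [LinearMap.comp_apply, AlgHom.toLinearMap_apply, LinearMap.mulRight_apply] at h ⊢
  by_cases hi : 0 ≤ i
  · exact key_pos K i.toNat p _ Q (by simp [weight, hi]) h
  · obtain ⟨σ, hy, hx⟩ := exists_sigma K
    obtain ⟨τ, h1, h2⟩ := key_pos K (-i).toNat (p.comp (1 - X))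
      (σ (aeval (WH K) p * weight K i)) (σ Q) (by
        rw [map_mul, weight, if_neg hi, map_pow, ← hy, ← aeval_algHom_apply, aeval_comp]
        congr 2
        rw [WH, map_mul, ← hy, ← hx]
        simp only [map_sub, map_one, aeval_X, weyl_rel]
        rw [gen5]) (by
        rw [← map_mul, ← map_mul, ← map_sub, h, map_one])
    refine ⟨τ.trans σ.symm, ?_, ?_⟩
    · simp [← h1]
    · simp [← h2]

/-- **Corollary.** If `[P,Q] = 1` in the first Weyl algebra and at least one of `P`, `Q` is a
nonzero homogeneous element (mass `1`), then `P = τ(Y)`, `Q = τ(X)` for some automorphism `τ`. -/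
theorem dixmier_mass_one
    (P Q : Weyl K)
    (hm : (∃ i : ℤ, P ∈ component K i ∧ P ≠ 0) ∨ (∃ j : ℤ, Q ∈ component K j ∧ Q ≠ 0))
    (hPQ : P * Q - Q * P = 1) :
    ∃ τ : Weyl K ≃ₐ[K] Weyl K, P = τ (Wy K) ∧ Q = τ (Wx K) := by
  rcases hm with ⟨i, hi, -⟩ | ⟨j, hj, -⟩
  · exact key_comp K i P Q hi hPQ
  · obtain ⟨τ, h1, h2⟩ := key_comp K j Q (-P) hj ((gen4 P Q).trans hPQ)
    obtain ⟨σ, hy, hx⟩ := exists_sigma K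
    refine ⟨σ.symm.trans τ, ?_, ?_⟩
    · have : σ.symm (Wy K) = -Wx K := by
        rw [AlgEquiv.symm_apply_eq, map_neg, ← hx, neg_neg]
      simp [this, ← h2]
    · have : σ.symm (Wx K) = Wy K := by
        rw [AlgEquiv.symm_apply_eq, hy]
      simp [this, ← h1]
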